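/- arXiv:1011.0551 — 2 statements merged into one kernel-verified Lean document; each statement's English description precedes it below -/
import Mathlib

section
/- Let G = (X, Σ ∪ Σi, P) be a CFG in normal form over the disjoint union of alphabets Σ and Σi, R = (D, Σ ∪ Σi, δ) a regular grammar, and G^R the projected product grammar over Σ. Then for every d, d' ∈ D, A ∈ X, and w1 ∈ Σ*: [dAd'] ⇒*_{G^R} w1 if and only if there exists w2 ∈ (Σ ∪ Σi)* with Proj_Σ(w2) = w1, d ⇒*_R w2·d', and A ⇒*_G w2. -/
/-!
A derivation in a context-free grammar is handled through fixed-point induction: if a family of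
languages `L A`, one per variable, is closed under the productions of the grammar, then every
terminal word derivable from `A` lies in `L A` (`CFG'.sat_of_derives`).

A derivation `d ⇒* w·d'` of a regular grammar is a path labelled `w` from `d` to `d'`
(`CFG'.derives_iff_run`), and paths concatenate and split along a concatenation of labels
(`CFG'.run_append`).

Both directions are then instances of the induction principle. From left to right it is applied to
`G^R` and the languages of projections of words that label a path `d → d'` and are derivable
from `A`; closure under a binary production is concatenation of paths. From right to left it is
applied to `G` and the languages of those `w` such that for every path `d → d'` labelled `w` the
variable `[dAd']` derives the projection of `w`; closure under a binary production is splitting of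
paths.
-/

/-- A context-free grammar given by a set of productions. -/
structure CFG' (T N : Type) where
  P : Set (N × List (Symbol T N))

namespace CFG'

variable {T N : Type}

/-- One-step derivation relation of a grammar. -/
inductive Step (G : CFG' T N) : List (Symbol T N) → List (Symbol T N) → Prop
  | step {A : N} {w : List (Symbol T N)} (y z : List (Symbol T N)) :
      (A, w) ∈ G.P → Step G (y ++ [Symbol.nonterminal A] ++ z) (y ++ w ++ z)

/-- Reflexive-transitive closure of the one-step derivation relation. -/
def Derives (G : CFG' T N) : List (Symbol T N) → List (Symbol T N) → Prop :=
  Relation.ReflTransGen G.Step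

/-- Every production lies in `X × (XX ∪ Γ ∪ {ε})`. -/
def NormalForm (G : CFG' T N) : Prop :=
  ∀ p ∈ G.P,
    (∃ B C : N, p.2 = [Symbol.nonterminal B, Symbol.nonterminal C]) ∨
    (∃ a : T, p.2 = [Symbol.terminal a]) ∨ p.2 = []

/-- Every production lies in `X × ((Γ·X) ∪ {ε})`. -/
def RegularForm (G : CFG' T N) : Prop :=
  ∀ p ∈ G.P,
    (∃ (a : T) (B : N), p.2 = [Symbol.terminal a, Symbol.nonterminal B]) ∨ p.2 = []

end CFG'
/-- The projected product grammar `G^R` over `Σ` of a normal-form CFG `G` over `Σ ∪ Σi`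
and a regular grammar `R` over `Σ ∪ Σi`.  A terminal `Sum.inl σ` is a symbol of `Σ`
and `Sum.inr τ` a symbol of `Σi`; the right-hand side `Proj_Σ(a)` of the second kind
of production keeps `a` exactly when it lies in `Σ`. -/
def projProductGrammar {Sg Si N D : Type} (G : CFG' (Sg ⊕ Si) N) (R : CFG' (Sg ⊕ Si) D) :
    CFG' Sg (D × N × D) where
  P := { p |
    (∃ (A : N) (d : D),
      (A, ([] : List (Symbol (Sg ⊕ Si) N))) ∈ G.P ∧ p = ((d, A, d), [])) ∨
    (∃ (A : N) (a : Sg ⊕ Si) (d d' : D),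
      (A, [Symbol.terminal a]) ∈ G.P ∧
      (d, [Symbol.terminal a, Symbol.nonterminal d']) ∈ R.P ∧
      p = ((d, A, d'), (a.getLeft?).toList.map Symbol.terminal)) ∨
    (∃ (A B C : N) (d0 d1 d2 : D),
      (A, [Symbol.nonterminal B, Symbol.nonterminal C]) ∈ G.P ∧
      p = ((d0, A, d2),
        [Symbol.nonterminal (d0, B, d1), Symbol.nonterminal (d1, C, d2)])) }

namespace CFG'

variable {T N : Type}

/-- Derivations may be carried out inside a fixed context. -/
theorem Derives.context {G : CFG' T N} {s t : List (Symbol T N)} (h : G.Derives s t)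
    (p q : List (Symbol T N)) : G.Derives (p ++ s ++ q) (p ++ t ++ q) := by
  induction h with
  | refl => exact Relation.ReflTransGen.refl
  | tail _ hs ih =>
    refine Relation.ReflTransGen.tail ih ?_
    cases hs with
    | step y z hP =>
      have := Step.step (p ++ y) (z ++ q) hP
      simpa using this

theorem Derives.append {G : CFG' T N} {s t s' t' : List (Symbol T N)} (h : G.Derives s t)
    (h' : G.Derives s' t') : G.Derives (s ++ s') (t ++ t') := by
  have h1 := h.context [] s'
  have h2 := h'.context t []
  simp only [List.nil_append, List.append_nil] at h1 h2
  exact Relation.ReflTransGen.trans h1 h2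

theorem Derives.of_mem {G : CFG' T N} {A : N} {r t : List (Symbol T N)} (hP : (A, r) ∈ G.P)
    (h : G.Derives r t) : G.Derives [Symbol.nonterminal A] t := by
  refine Relation.ReflTransGen.head ?_ h
  simpa using Step.step [] [] hP

/-- The language denoted by a sentential form when the variable `A` is interpreted as the
language `L A`: the concatenation of the languages of its symbols. -/
def Sat (L : N → List T → Prop) : List (Symbol T N) → List T → Prop
  | [], w => w = []
  | Symbol.terminal a :: s, w => ∃ v, w = a :: v ∧ Sat L s v
  | Symbol.nonterminal A :: s, w => ∃ u v, w = u ++ v ∧ L A u ∧ Sat L s v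

theorem sat_append (L : N → List T → Prop) (s t : List (Symbol T N)) (w : List T) :
    Sat L (s ++ t) w ↔ ∃ u v, w = u ++ v ∧ Sat L s u ∧ Sat L t v := by
  induction s generalizing w with
  | nil => simp [Sat]
  | cons x s ih =>
    cases x with
    | terminal a =>
      simp only [List.cons_append, Sat, ih]
      constructor
      · rintro ⟨_, rfl, u, v, rfl, hu, hv⟩
        exact ⟨a :: u, v, rfl, ⟨u, rfl, hu⟩, hv⟩
      · rintro ⟨_, v, rfl, ⟨u, rfl, hu⟩, hv⟩
        exact ⟨u ++ v, rfl, u, v, rfl, hu, hv⟩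
    | nonterminal A =>
      simp only [List.cons_append, Sat, ih]
      constructor
      · rintro ⟨p, _, rfl, hp, u, v, rfl, hu, hv⟩
        exact ⟨p ++ u, v, by simp, ⟨p, u, rfl, hp, hu⟩, hv⟩
      · rintro ⟨_, v, rfl, ⟨p, u, rfl, hp, hu⟩, hv⟩
        exact ⟨p, u ++ v, by simp, hp, u, v, rfl, hu, hv⟩

theorem sat_terminals (L : N → List T → Prop) (w : List T) :
    Sat L (w.map Symbol.terminal) w := by
  induction w with
  | nil => simp [Sat]
  | cons a w ih => exact ⟨w, rfl, ih⟩

/-- Fixed-point induction: an interpretation of the variables that is closed under the productions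
contains every derivable terminal word. -/
theorem sat_of_derives {G : CFG' T N} (L : N → List T → Prop)
    (hL : ∀ A r w, (A, r) ∈ G.P → Sat L r w → L A w) {s : List (Symbol T N)} {w : List T}
    (h : G.Derives s (w.map Symbol.terminal)) : Sat L s w := by
  induction h using Relation.ReflTransGen.head_induction_on with
  | refl => exact sat_terminals L w
  | head hs _ ih =>
    cases hs with
    | step y z hP =>
      obtain ⟨_, v, rfl, h1, hv⟩ := (sat_append L _ _ _).1 ih
      obtain ⟨u, p, rfl, hu, hp⟩ := (sat_append L _ _ _).1 h1
      refine (sat_append L _ _ _).2 ⟨_, v, rfl, (sat_append L _ _ _).2 ⟨u, p, rfl, hu, ?_⟩, hv⟩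
      exact ⟨p, [], by simp, hL _ _ _ hP hp, rfl⟩

/-- `sat_of_derives` for a single variable. -/
theorem closed_of_derives {G : CFG' T N} (L : N → List T → Prop)
    (hL : ∀ A r w, (A, r) ∈ G.P → Sat L r w → L A w) {A : N} {w : List T}
    (h : G.Derives [Symbol.nonterminal A] (w.map Symbol.terminal)) : L A w := by
  obtain ⟨u, v, rfl, hu, rfl⟩ := sat_of_derives L hL h
  simpa using hu

/-- `R.Run d w d'`: the regular grammar `R`, read as an automaton with a transition `d → d'`
labelled `a` for each production `d → a·d'`, has a path from `d` to `d'` labelled `w`. -/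
def Run (R : CFG' T N) : N → List T → N → Prop
  | d, [], d' => d = d'
  | d, a :: w, d' => ∃ q, (d, [Symbol.terminal a, Symbol.nonterminal q]) ∈ R.P ∧ Run R q w d'

theorem run_append (R : CFG' T N) (d d' : N) (u v : List T) :
    R.Run d (u ++ v) d' ↔ ∃ q, R.Run d u q ∧ R.Run q v d' := by
  induction u generalizing d with
  | nil => simp [Run]
  | cons a u ih =>
    simp only [List.cons_append, Run, ih]
    constructor
    · rintro ⟨p, hp, q, h1, h2⟩
      exact ⟨q, ⟨p, hp, h1⟩, h2⟩
    · rintro ⟨q, ⟨p, hp, h1⟩, h2⟩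
      exact ⟨p, hp, q, h1, h2⟩

theorem derives_of_run {R : CFG' T N} {d d' : N} {w : List T} (h : R.Run d w d') :
    R.Derives [Symbol.nonterminal d]
      (w.map Symbol.terminal ++ [Symbol.nonterminal d']) := by
  induction w generalizing d with
  | nil =>
    obtain rfl : d = d' := h
    exact Relation.ReflTransGen.refl
  | cons a w ih =>
    obtain ⟨q, hq, h⟩ := h
    exact Derives.of_mem hq (by simpa using (ih h).context [Symbol.terminal a] [])

theorem nonterminal_notMem_terminals (A : N) (u : List T) :
    (Symbol.nonterminal A : Symbol T N) ∉ u.map Symbol.terminal := by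
  simp

/-- In a sentential form `u·q` with `u` a terminal word, the only variable occurrence is the
final one. -/
theorem split_terminals_append {u : List T} {A q : N} {y z : List (Symbol T N)}
    (h : y ++ [Symbol.nonterminal A] ++ z = u.map Symbol.terminal ++ [Symbol.nonterminal q]) :
    y = u.map Symbol.terminal ∧ A = q ∧ z = [] := by
  induction u generalizing y with
  | nil => cases y <;> simp_all
  | cons a u ih =>
    cases y with
    | nil => simp at h
    | cons x y =>
      simp only [List.cons_append, List.map_cons, List.cons.injEq] at h
      obtain ⟨h1, h2, h3⟩ := ih h.2
      exact ⟨by rw [h.1, h1]; rfl, h2, h3⟩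

/-- Sentential forms of a regular grammar derivable from `d` are terminal words, or `w·q` with a
path from `d` to `q` labelled `w`. -/
theorem run_or_terminals_of_derives {R : CFG' T N} (hR : R.RegularForm) {d : N}
    {s : List (Symbol T N)} (h : R.Derives [Symbol.nonterminal d] s) :
    (∃ w q, s = w.map Symbol.terminal ++ [Symbol.nonterminal q] ∧ R.Run d w q) ∨
      ∃ w : List T, s = w.map Symbol.terminal := by
  induction h with
  | refl => exact Or.inl ⟨[], d, rfl, rfl⟩
  | tail _ hs ih =>
    cases hs with
    | @step A r y z hP =>
      rcases ih with ⟨w, q, hw, hrun⟩ | ⟨w, hw⟩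
      · obtain ⟨rfl, rfl, rfl⟩ := split_terminals_append hw
        rcases hR _ hP with ⟨a, B, hr⟩ | hr
        · obtain rfl : r = _ := hr
          refine Or.inl ⟨w ++ [a], B, by simp, ?_⟩
          exact (run_append _ _ _ _ _).2 ⟨_, hrun, B, hP, rfl⟩
        · obtain rfl : r = _ := hr
          exact Or.inr ⟨w, by simp⟩
      · exact absurd (hw ▸ (by simp)) (nonterminal_notMem_terminals A w)

theorem derives_iff_run {R : CFG' T N} (hR : R.RegularForm) (d d' : N) (w : List T) :
    R.Derives [Symbol.nonterminal d] (w.map Symbol.terminal ++ [Symbol.nonterminal d']) ↔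
      R.Run d w d' := by
  refine ⟨fun h => ?_, derives_of_run⟩
  rcases run_or_terminals_of_derives hR h with ⟨u, q, hu, hrun⟩ | ⟨u, hu⟩
  · obtain ⟨h1, rfl, -⟩ := split_terminals_append (z := []) (by simpa using hu)
    obtain rfl : w = u :=
      List.map_injective_iff.2 (fun a b h => by injection h) h1
    exact hrun
  · exact absurd (hu ▸ (by simp)) (nonterminal_notMem_terminals d' u)

end CFG'

/-- `[dAd'] ⇒*_{G^R} w1` iff there is `w2 ∈ (Σ ∪ Σi)*` with `Proj_Σ(w2) = w1`,
`d ⇒*_R w2·d'` and `A ⇒*_G w2`. -/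
theorem projProductGrammar_derives_iff {Sg Si N D : Type}
    [Fintype Sg] [Fintype Si] [Fintype N] [Fintype D]
    (G : CFG' (Sg ⊕ Si) N) (hG : G.NormalForm) (hGfin : G.P.Finite)
    (R : CFG' (Sg ⊕ Si) D) (hR : R.RegularForm) (hRfin : R.P.Finite)
    (d d' : D) (A : N) (w1 : List Sg) :
    (projProductGrammar G R).Derives
        [Symbol.nonterminal (d, A, d')] (w1.map Symbol.terminal) ↔
      ∃ w2 : List (Sg ⊕ Si),
        w2.filterMap Sum.getLeft? = w1 ∧
        R.Derives [Symbol.nonterminal d]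
          (w2.map Symbol.terminal ++ [Symbol.nonterminal d']) ∧
        G.Derives [Symbol.nonterminal A] (w2.map Symbol.terminal) := by
  simp only [CFG'.derives_iff_run hR]
  constructor
  · intro h
    refine CFG'.closed_of_derives (fun (x : D × N × D) w => ∃ w2 : List (Sg ⊕ Si),
      w2.filterMap Sum.getLeft? = w ∧ R.Run x.1 w2 x.2.2 ∧
        G.Derives [Symbol.nonterminal x.2.1] (w2.map Symbol.terminal)) ?_ h
    rintro x r w (⟨A, d, hP, hx⟩ | ⟨A, a, d, d', hP, hd, hx⟩ | ⟨A, B, C, d0, d1, d2, hP, hx⟩) hw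
    · cases hx
      obtain rfl : w = [] := hw
      exact ⟨[], rfl, rfl, CFG'.Derives.of_mem hP Relation.ReflTransGen.refl⟩
    · cases hx
      refine ⟨[a], ?_, ⟨d', hd, rfl⟩, CFG'.Derives.of_mem hP Relation.ReflTransGen.refl⟩
      cases a with
      | inl b =>
        obtain ⟨v, rfl, rfl⟩ := hw
        rfl
      | inr b => exact Eq.symm hw
    · cases hx
      obtain ⟨_, _, rfl, ⟨u, rfl, hu1, hu2⟩, _, _, rfl, ⟨v, rfl, hv1, hv2⟩, rfl⟩ := hw
      refine ⟨u ++ v, by simp, (CFG'.run_append _ _ _ _ _).2 ⟨d1, hu1, hv1⟩, ?_⟩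
      rw [List.map_append]
      exact CFG'.Derives.of_mem hP (CFG'.Derives.append hu2 hv2)
  · rintro ⟨w2, rfl, hrun, hder⟩
    refine CFG'.closed_of_derives (fun A w => ∀ d d', R.Run d w d' →
      (projProductGrammar G R).Derives [Symbol.nonterminal (d, A, d')]
        ((w.filterMap Sum.getLeft?).map Symbol.terminal)) ?_ hder d d' hrun
    intro A r w hP hw d d' hrun
    rcases hG _ hP with ⟨B, C, hr⟩ | ⟨a, hr⟩ | hr
    · obtain rfl : r = _ := hr
      obtain ⟨u, _, rfl, hu, v, _, rfl, hv, rfl⟩ := hw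
      rw [List.append_nil] at hrun ⊢
      obtain ⟨q, h1, h2⟩ := (CFG'.run_append _ _ _ _ _).1 hrun
      rw [List.filterMap_append, List.map_append]
      exact CFG'.Derives.of_mem (Or.inr (Or.inr ⟨A, B, C, d, q, d', hP, rfl⟩))
        (CFG'.Derives.append (hu _ _ h1) (hv _ _ h2))
    · obtain rfl : r = _ := hr
      obtain ⟨_, rfl, rfl⟩ := hw
      obtain ⟨_, hd, rfl⟩ := hrun
      refine CFG'.Derives.of_mem (Or.inr (Or.inl ⟨A, a, d, _, hP, hd, rfl⟩)) ?_
      cases a <;> exact Relation.ReflTransGen.refl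
    · obtain rfl : r = _ := hr
      obtain rfl : w = [] := hw
      obtain rfl : d = d' := hrun
      exact CFG'.Derives.of_mem (Or.inl ⟨A, d, hP, rfl⟩) Relation.ReflTransGen.refl
end

section
/- Let G = (X, Σ, P, S) be an initialized CFG in normal form, let k > 0, and let (N^k_G, m_ι) be the initialized Petri net with places X ∪ Σ ∪ {$}, transitions P, F(A → BC) = ⟨{A, $}, {B, C}⟩, F(A → σ) = ⟨{A}, Parikh(σ) ⊕ {$}⟩ for σ ∈ Σ ∪ {ε}, and initial marking m_ι = {S} ⊕ {$^{k−1}} (k−1 tokens in place $). Then for every multiset m over the places of N^k_G: the marking m ⊕ {$^k} is reachable in (N^k_G, m_ι) if and only if m ∈ Parikh(L^{(k)}(G)). -/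
/-- The number of occurrences of variables in a sentential form. -/
def numVars {T N : Type} (α : List (Symbol T N)) : ℕ :=
  (α.filter fun s => match s with
    | Symbol.nonterminal _ => true
    | Symbol.terminal _ => false).length

/-- Index-bounded derivations: every sentential form along the derivation contains at
most `k` occurrences of variables. -/
inductive CFG'.DerivesIdx {T N : Type} (G : CFG' T N) (k : ℕ) :
    List (Symbol T N) → List (Symbol T N) → Prop
  | refl (α : List (Symbol T N)) : numVars α ≤ k → G.DerivesIdx k α α
  | tail {α β γ : List (Symbol T N)} :
      G.DerivesIdx k α β → G.Step β γ → numVars γ ≤ k → G.DerivesIdx k α γ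
/-- A Petri net on places `S` and transitions `T`: input and output multisets. -/
structure PetriNet (S T : Type) where
  I : T → Multiset S
  O : T → Multiset S

namespace PetriNet

variable {S T : Type}

/-- `t` is enabled at `m` and firing it yields `m'`. -/
def Fire (N : PetriNet S T) (t : T) (m m' : Multiset S) : Prop :=
  N.I t ≤ m ∧ m' + N.I t = m + N.O t

/-- Firing a finite sequence of transitions. -/
inductive FireSeq (N : PetriNet S T) : List T → Multiset S → Multiset S → Prop
  | nil (m : Multiset S) : FireSeq N [] m m
  | cons {t : T} {w : List T} {m m1 m' : Multiset S} :
      N.Fire t m m1 → FireSeq N w m1 m' → FireSeq N (t :: w) m m'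

/-- `m` is reachable from `m0`. -/
def Reach (N : PetriNet S T) (m0 m : Multiset S) : Prop :=
  ∃ w : List T, N.FireSeq w m0 m

/-- `m` is coverable from `m0`. -/
def Coverable (N : PetriNet S T) (m0 m : Multiset S) : Prop :=
  ∃ m' : Multiset S, N.Reach m0 m' ∧ m ≤ m'

/-- The initialized net `(N, m0)` is bounded: finitely many reachable markings. -/
def Bounded (N : PetriNet S T) (m0 : Multiset S) : Prop :=
  {m : Multiset S | N.Reach m0 m}.Finite

end PetriNet

/-- A marking is Boolean iff every multiplicity is at most one. -/
def BooleanMarking {S : Type} (m : Multiset S) : Prop := m.Nodup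

/-- An initialized Petri net is Boolean iff the initial marking and all the `I(t)`, `O(t)`
are Boolean. -/
def BooleanNet {S T : Type} (N : PetriNet S T) (m0 : Multiset S) : Prop :=
  BooleanMarking m0 ∧ ∀ t : T, BooleanMarking (N.I t) ∧ BooleanMarking (N.O t)

/-- The Petri net `N^k_G`: places are `X ∪ Σ ∪ {$}` (the budget place `$` is `none`),
transitions are the productions, with
`F(A → BC) = ⟨{A, $}, {B, C}⟩` and `F(A → σ) = ⟨{A}, Parikh(σ) ⊕ {$}⟩` for `σ ∈ Σ ∪ {ε}`. -/
def idxNet {A N : Type} (G : CFG' A N) :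
    PetriNet (Option (Symbol A N)) {p // p ∈ G.P} where
  I p :=
    match p.1.2 with
    | [Symbol.nonterminal _, Symbol.nonterminal _] =>
        {some (Symbol.nonterminal p.1.1), none}
    | _ => {some (Symbol.nonterminal p.1.1)}
  O p :=
    match p.1.2 with
    | [Symbol.nonterminal B, Symbol.nonterminal C] =>
        {some (Symbol.nonterminal B), some (Symbol.nonterminal C)}
    | α => (α.map some : Multiset (Option (Symbol A N))) + {none}

/-- The marking encoding a sentential form: its Parikh image and one token in the budget place
`none` for each variable that may still be created. The truncated subtraction is meaningful for
`numVars α ≤ k` only. -/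
def idxMark {A N : Type} (k : ℕ) (α : List (Symbol A N)) : Multiset (Option (Symbol A N)) :=
  (α : Multiset (Symbol A N)).map some + Multiset.replicate (k - numVars α) none

theorem numVars_append {A N : Type} (α β : List (Symbol A N)) :
    numVars (α ++ β) = numVars α + numVars β := by
  simp [numVars]

theorem numVars_nonterminal {A N : Type} (X : N) :
    numVars [(Symbol.nonterminal X : Symbol A N)] = 1 := rfl

theorem numVars_map_terminal {A N : Type} (w : List A) :
    numVars (w.map (Symbol.terminal : A → Symbol A N)) = 0 := by
  simp [numVars]

theorem exists_map_terminal_of_numVars_eq_zero {A N : Type} :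
    ∀ α : List (Symbol A N), numVars α = 0 → ∃ w : List A, α = w.map Symbol.terminal
  | [], _ => ⟨[], rfl⟩
  | Symbol.terminal a :: α, h => by
    obtain ⟨w, rfl⟩ := exists_map_terminal_of_numVars_eq_zero α (by simpa [numVars] using h)
    exact ⟨a :: w, rfl⟩
  | Symbol.nonterminal X :: α, h => by simp [numVars] at h

/-- Applying a production at an occurrence of its left-hand side satisfies the firing equation.
The two cases of the normal form are the right-hand sides with two variables and with none. -/
theorem idxMark_fire_eq {A N : Type} {G : CFG' A N} (hG : G.NormalForm) (k : ℕ)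
    (t : {p // p ∈ G.P}) (y z : List (Symbol A N))
    (h₁ : numVars (y ++ [Symbol.nonterminal t.1.1] ++ z) ≤ k)
    (h₂ : numVars (y ++ t.1.2 ++ z) ≤ k) :
    idxMark k (y ++ t.1.2 ++ z) + (idxNet G).I t =
      idxMark k (y ++ [Symbol.nonterminal t.1.1] ++ z) + (idxNet G).O t := by
  obtain ⟨⟨X, r⟩, hp⟩ := t
  rcases hG _ hp with ⟨B, C, h⟩ | ⟨a, h⟩ | h
  · dsimp only at h
    subst h
    simp only [numVars_append, numVars_nonterminal] at h₁ h₂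
    have hBC : numVars [(Symbol.nonterminal B : Symbol A N), Symbol.nonterminal C] = 2 := rfl
    rw [hBC] at h₂
    have e : k - (numVars y + 1 + numVars z) = (k - (numVars y + 2 + numVars z)) + 1 := by omega
    simp only [idxMark, numVars_append, numVars_nonterminal, hBC, e, idxNet,
      Multiset.replicate_succ, ← Multiset.coe_add, Multiset.map_add]
    simp only [Multiset.insert_eq_cons, ← Multiset.singleton_add, Multiset.map_add,
      Multiset.map_singleton, Multiset.map_coe, ← Multiset.cons_coe, Multiset.coe_nil, add_zero]
    abel
  all_goals
    dsimp only at h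
    subst h
    simp only [numVars_append, numVars_nonterminal] at h₁ h₂
    have e : k - (numVars y + 0 + numVars z) = (k - (numVars y + 1 + numVars z)) + 1 := by omega
  · have ha : numVars [(Symbol.terminal a : Symbol A N)] = 0 := rfl
    simp only [idxMark, numVars_append, numVars_nonterminal, ha, e, idxNet,
      Multiset.replicate_succ, ← Multiset.coe_add, Multiset.map_add]
    simp only [← Multiset.singleton_add, Multiset.map_add, Multiset.map_singleton,
      Multiset.map_coe, List.map_cons, List.map_nil, ← Multiset.cons_coe, Multiset.coe_nil,
      add_zero]
    abel
  · have ha : numVars ([] : List (Symbol A N)) = 0 := rfl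
    simp only [idxMark, numVars_append, numVars_nonterminal, ha, e, idxNet,
      Multiset.replicate_succ, ← Multiset.coe_add, Multiset.map_add]
    simp only [← Multiset.singleton_add, Multiset.map_add, Multiset.map_singleton,
      Multiset.map_coe, List.map_cons, List.map_nil, ← Multiset.cons_coe, Multiset.coe_nil,
      add_zero]
    abel

theorem nonterminal_mem_idxNet_I {A N : Type} {G : CFG' A N} (t : {p // p ∈ G.P}) :
    some (Symbol.nonterminal t.1.1) ∈ (idxNet G).I t := by
  simp only [idxNet]
  split <;> simp

/-- If the production is enabled at `idxMark k (y X z)`, the index bound survives its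
application: a rule with two variables on the right needs a budget token. -/
theorem numVars_le_of_enabled {A N : Type} {G : CFG' A N} (hG : G.NormalForm) (k : ℕ)
    (t : {p // p ∈ G.P}) (y z : List (Symbol A N))
    (h₁ : numVars (y ++ [Symbol.nonterminal t.1.1] ++ z) ≤ k)
    (hle : (idxNet G).I t ≤ idxMark k (y ++ [Symbol.nonterminal t.1.1] ++ z)) :
    numVars (y ++ t.1.2 ++ z) ≤ k := by
  obtain ⟨⟨X, r⟩, hp⟩ := t
  rcases hG _ hp with ⟨B, C, h⟩ | ⟨a, h⟩ | h <;> dsimp only at h <;> subst h <;>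
    simp only [numVars_append, numVars_nonterminal] at h₁ ⊢
  · have hm : (none : Option (Symbol A N)) ∈ idxMark k (y ++ [Symbol.nonterminal X] ++ z) :=
      Multiset.mem_of_le hle (by simp [idxNet])
    simp only [idxMark, numVars_append, numVars_nonterminal, Multiset.mem_add, Multiset.mem_map,
      Multiset.mem_replicate, reduceCtorEq, and_false, exists_false, false_or, and_true] at hm
    have hBC : numVars [(Symbol.nonterminal B : Symbol A N), Symbol.nonterminal C] = 2 := rfl
    omega
  · have ha : numVars [(Symbol.terminal a : Symbol A N)] = 0 := rfl
    omega
  · have ha : numVars ([] : List (Symbol A N)) = 0 := rfl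
    omega

theorem exists_step_of_fire {A N : Type} {G : CFG' A N} (hG : G.NormalForm) {k : ℕ}
    {t : {p // p ∈ G.P}} {α : List (Symbol A N)} {M : Multiset (Option (Symbol A N))}
    (hα : numVars α ≤ k) (hf : (idxNet G).Fire t (idxMark k α) M) :
    ∃ β, G.Step α β ∧ numVars β ≤ k ∧ M = idxMark k β := by
  obtain ⟨hle, heq⟩ := hf
  have hmem : Symbol.nonterminal t.1.1 ∈ α := by
    simpa [idxMark, Multiset.mem_replicate] using
      Multiset.mem_of_le hle (nonterminal_mem_idxNet_I t)
  obtain ⟨y, z, rfl⟩ := List.append_of_mem hmem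
  rw [List.append_cons] at hα hle heq ⊢
  have hβ := numVars_le_of_enabled hG k t y z hα hle
  refine ⟨y ++ t.1.2 ++ z, CFG'.Step.step y z t.2, hβ, ?_⟩
  exact add_right_cancel (heq.trans (idxMark_fire_eq hG k t y z hα hβ).symm)

theorem exists_fire_of_step {A N : Type} {G : CFG' A N} (hG : G.NormalForm) {k : ℕ}
    {α β : List (Symbol A N)} (hs : G.Step α β) (hα : numVars α ≤ k) (hβ : numVars β ≤ k) :
    ∃ t, (idxNet G).Fire t (idxMark k α) (idxMark k β) := by
  obtain @⟨X, r, y, z, hp⟩ := hs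
  refine ⟨⟨(X, r), hp⟩, ?_, idxMark_fire_eq hG k ⟨(X, r), hp⟩ y z hα hβ⟩
  have hX : ({some (Symbol.nonterminal X)} : Multiset (Option (Symbol A N))) ≤
      ((y ++ [Symbol.nonterminal X] ++ z : List (Symbol A N)) : Multiset _).map some := by
    simp
  rcases hG _ hp with ⟨B, C, h⟩ | ⟨a, h⟩ | h <;> dsimp only at h <;> subst h
  · have hBC : numVars [(Symbol.nonterminal B : Symbol A N), Symbol.nonterminal C] = 2 := rfl
    have hd : ({none} : Multiset (Option (Symbol A N))) ≤
        Multiset.replicate (k - numVars (y ++ [Symbol.nonterminal X] ++ z)) none := by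
      simp only [numVars_append, numVars_nonterminal] at hβ ⊢
      rw [Multiset.singleton_le, Multiset.mem_replicate]
      exact ⟨by omega, rfl⟩
    exact add_le_add hX hd
  · exact hX.trans (Multiset.le_add_right _ _)
  · exact hX.trans (Multiset.le_add_right _ _)

theorem PetriNet.FireSeq.snoc {P T : Type} {R : PetriNet P T} {w : List T} {t : T}
    {m m₁ m₂ : Multiset P} (h : R.FireSeq w m m₁) (hf : R.Fire t m₁ m₂) :
    R.FireSeq (w ++ [t]) m m₂ := by
  induction h with
  | nil m => exact .cons hf (.nil _)
  | cons h _ ih => exact .cons h (ih hf)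

/-- Every firing sequence from the encoding of a sentential form lifts to a derivation. -/
theorem exists_derivesIdx_of_fireSeq {A N : Type} {G : CFG' A N} (hG : G.NormalForm) {k : ℕ}
    {w : List {p // p ∈ G.P}} {M M' : Multiset (Option (Symbol A N))}
    (h : (idxNet G).FireSeq w M M') {γ α : List (Symbol A N)} (hα : numVars α ≤ k)
    (hM : M = idxMark k α) (hd : G.DerivesIdx k γ α) :
    ∃ β, G.DerivesIdx k γ β ∧ M' = idxMark k β := by
  induction h generalizing α with
  | nil m => exact ⟨α, hd, hM⟩
  | cons hf _ ih =>
    subst hM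
    obtain ⟨β, hs, hβ, hM₁⟩ := exists_step_of_fire hG hα hf
    exact ih hβ hM₁ (hd.tail hs hβ)

theorem CFG'.DerivesIdx.numVars_le {A N : Type} {G : CFG' A N} {k : ℕ}
    {α β : List (Symbol A N)} (h : G.DerivesIdx k α β) : numVars β ≤ k := by
  cases h <;> assumption

theorem reach_of_derivesIdx {A N : Type} {G : CFG' A N} (hG : G.NormalForm) {k : ℕ}
    {α β : List (Symbol A N)} (h : G.DerivesIdx k α β) :
    (idxNet G).Reach (idxMark k α) (idxMark k β) := by
  induction h with
  | refl => exact ⟨[], .nil _⟩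
  | tail hd hs hγ ih =>
    obtain ⟨w, hw⟩ := ih
    obtain ⟨t, ht⟩ := exists_fire_of_step hG hs hd.numVars_le hγ
    exact ⟨w ++ [t], hw.snoc ht⟩

theorem idxMark_map_terminal {A N : Type} (k : ℕ) (w : List A) :
    idxMark k (w.map (Symbol.terminal : A → Symbol A N)) =
      (w : Multiset A).map (fun a => some (Symbol.terminal a)) + Multiset.replicate k none := by
  simp [idxMark, numVars_map_terminal, Function.comp_def]

/-- A full budget leaves no room for variables. -/
theorem numVars_eq_zero_of_idxMark_eq {A N : Type} {k : ℕ} (hk : 0 < k) {β : List (Symbol A N)}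
    {m : Multiset (Option (Symbol A N))} (h : m + Multiset.replicate k none = idxMark k β) :
    numVars β = 0 := by
  classical
  have hc := congrArg (Multiset.count none) h
  have h0 : Multiset.count (none : Option (Symbol A N)) ((β : Multiset _).map some) = 0 :=
    Multiset.count_eq_zero.2 (by simp)
  rw [idxMark, Multiset.count_add, Multiset.count_add, h0, Multiset.count_replicate_self,
    Multiset.count_replicate_self] at hc
  omega

/-- For a normal-form grammar `G`, `k > 0`, and every multiset `m` over the places:
`m ⊕ {$^k}` is reachable in `(N^k_G, {S} ⊕ {$^{k-1}})` iff `m ∈ Parikh(L^{(k)}(G))`. -/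
theorem idxNet_reach_iff_parikh_boundedIndex {A N : Type} [Fintype A] [Fintype N]
    (G : CFG' A N) (hG : G.NormalForm) (hfin : G.P.Finite) (S : N)
    (k : ℕ) (hk : 0 < k) (m : Multiset (Option (Symbol A N))) :
    (idxNet G).Reach
        ({some (Symbol.nonterminal S)} + Multiset.replicate (k - 1) none)
        (m + Multiset.replicate k none) ↔
      ∃ w : List A,
        G.DerivesIdx k [Symbol.nonterminal S] (w.map Symbol.terminal) ∧
        m = (↑w : Multiset A).map (fun a => some (Symbol.terminal a)) := by
  have hS : ({some (Symbol.nonterminal S)} + Multiset.replicate (k - 1) none :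
      Multiset (Option (Symbol A N))) = idxMark k [Symbol.nonterminal S] := rfl
  rw [hS]
  constructor
  · rintro ⟨v, hv⟩
    have h1 : numVars [(Symbol.nonterminal S : Symbol A N)] ≤ k := hk
    obtain ⟨β, hd, hβ⟩ := exists_derivesIdx_of_fireSeq hG hv h1 rfl (.refl _ h1)
    obtain ⟨w, rfl⟩ :=
      exists_map_terminal_of_numVars_eq_zero β (numVars_eq_zero_of_idxMark_eq hk hβ)
    rw [idxMark_map_terminal] at hβ
    exact ⟨w, hd, add_right_cancel hβ⟩
  · rintro ⟨w, hd, rfl⟩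
    rw [← idxMark_map_terminal]
    exact reach_of_derivesIdx hG hd
end
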